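/- Suppose 𝔪 = 𝔪_1 ⊕ ⋯ ⊕ 𝔪_r is an orthogonal direct sum of subspaces and λ_1 < ⋯ < λ_r are real numbers satisfying the compatibility condition. Define Ric^d(Y,Z) := tr(X ↦ R^d(X,Y)Z), the difference scalar curvature s^d := Σ_a Ric^d(E_a,E_a) over an orthonormal basis {E_a} of 𝔪, and for each j the difference scalar curvature s^d_j of 𝔪_j, namely s^d_j := Σ_{a,b} ⟨R^d(F_a,F_b)F_b,F_a⟩ over an orthonormal basis {F_a} of 𝔪_j. Then s^d_1 + ⋯ + s^d_r = s^d. -/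

import Mathlib

/-!
Write `T(X,Y,Z) = ⟪[X,Y],Z⟫` and `K(X,Y) = ⟪R^d(X,Y)Y,X⟫`. The Levi-Civita product is metric, so `K`
is symmetric in `X, Y`, which makes the double sum of `K` independent of the orthonormal bases used
for its two slots. Hence `s^d` may be computed in the union `e` of the bases of the summands, and
the claim is that the terms of `K` with `X ∈ 𝔪_i`, `Y ∈ 𝔪_j`, `i ≠ j` add up to zero.

Expanding in `e`, with `A = T(X,Y,Z)`, `B = T(Y,Z,X)`, `C = T(Z,X,Y)`,
`4 K(X,Y) = -4 ⟪α(X,X),α(Y,Y)⟫ + ∑_Z (B² + C² - 2BC - 3A² + 2AB + 2AC)`.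
Compatibility with a repeated index gives `[𝔪_i,𝔪_i] ⊆ 𝔪_i` and that `ad X`, `X ∈ 𝔪_i`, is
skew on `𝔪_j` for `i ≠ j`. So `α(X,X) ∈ 𝔪_i`, the first term vanishes for `i ≠ j`, and so do the
summands with `Z ∈ 𝔪_i` (there `C = 0`, `A = B`) and with `Z ∈ 𝔪_j` (there `B = 0`, `A = C`).
For `Z ∈ 𝔪_k` with `i, j, k` distinct, compatibility says that `(A, B, C)` is proportional to
`(x², y², z²)`, where `x, y, z` are the differences of consecutive `λ`'s and `x + y + z = 0`.
The sum of the summand over the three cyclic rotations of `(X,Y,Z)` is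
`2(AB + BC + CA) - (A² + B² + C²)`, which is zero by Heron's factorization.
-/

open scoped RealInnerProductSpace

/-- The endomorphism `X ↦ R^d(X,Y)Z = α(X,α(Y,Z)) − α(Y,α(X,Z)) − α([X,Y],Z)`,
where `a` is the Levi-Civita product and `b` the bracket. -/
noncomputable def diffCurvOp {m : Type*} [NormedAddCommGroup m] [InnerProductSpace ℝ m]
    (b a : m →ₗ[ℝ] m →ₗ[ℝ] m) (Y Z : m) : m →ₗ[ℝ] m :=
  a.flip (a Y Z) - (a Y) ∘ₗ (a.flip Z) - (a.flip Z) ∘ₗ (b.flip Y)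

section Pointwise

variable {m : Type*} [NormedAddCommGroup m] [InnerProductSpace ℝ m]
  {b a : m →ₗ[ℝ] m →ₗ[ℝ] m}

theorem leviCivita_metric
    (hb : ∀ X Y : m, b X Y = - b Y X)
    (ha : ∀ X Y Z : m, 2 * ⟪a X Y, Z⟫ = ⟪b X Y, Z⟫ - ⟪X, b Y Z⟫ - ⟪b X Z, Y⟫)
    (X Y Z : m) : ⟪a X Y, Z⟫ = - ⟪a X Z, Y⟫ := by
  have h1 := ha X Y Z
  have h2 := ha X Z Y
  rw [hb Z Y, inner_neg_right] at h2
  linarith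

theorem diffCurvOp_inner
    (hb : ∀ X Y : m, b X Y = - b Y X)
    (ha : ∀ X Y Z : m, 2 * ⟪a X Y, Z⟫ = ⟪b X Y, Z⟫ - ⟪X, b Y Z⟫ - ⟪b X Z, Y⟫)
    (X Y : m) : ⟪diffCurvOp b a Y Y X, X⟫ =
      - ⟪a X X, a Y Y⟫ + ⟪a X Y, a Y X⟫ - ⟪a (b X Y) Y, X⟫ := by
  have h1 := leviCivita_metric hb ha X (a Y Y) X
  have h2 := leviCivita_metric hb ha Y (a X Y) X
  simp only [diffCurvOp, LinearMap.sub_apply, LinearMap.comp_apply, LinearMap.flip_apply,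
    inner_sub_left]
  linarith [real_inner_comm (a X X) (a Y Y), real_inner_comm (a X Y) (a Y X)]

/-- The form `⟪R^d(X,Y)Y,X⟫` is symmetric, although the bracket need not satisfy the Jacobi
identity. -/
theorem diffCurvOp_inner_symm
    (hb : ∀ X Y : m, b X Y = - b Y X)
    (ha : ∀ X Y Z : m, 2 * ⟪a X Y, Z⟫ = ⟪b X Y, Z⟫ - ⟪X, b Y Z⟫ - ⟪b X Z, Y⟫)
    (X Y : m) : ⟪diffCurvOp b a Y Y X, X⟫ = ⟪diffCurvOp b a X X Y, Y⟫ := by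
  rw [diffCurvOp_inner hb ha, diffCurvOp_inner hb ha, hb Y X, map_neg, LinearMap.neg_apply,
    inner_neg_left, leviCivita_metric hb ha (b X Y) Y X, real_inner_comm (a X X),
    real_inner_comm (a X Y)]

/-- The summand in the expansion of `4 ⟪R^d(X,Y)Y,X⟫` over an orthonormal basis in `Z`, apart from
the term in `⟪α(X,X),α(Y,Y)⟫`. -/
noncomputable def curvSummand (b : m →ₗ[ℝ] m →ₗ[ℝ] m) (X Y Z : m) : ℝ :=
  ⟪b Y Z, X⟫ ^ 2 + ⟪b Z X, Y⟫ ^ 2 - 2 * ⟪b Y Z, X⟫ * ⟪b Z X, Y⟫ - 3 * ⟪b X Y, Z⟫ ^ 2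
    + 2 * ⟪b X Y, Z⟫ * ⟪b Y Z, X⟫ + 2 * ⟪b X Y, Z⟫ * ⟪b Z X, Y⟫

theorem diffCurvOp_inner_eq_sum {ι : Type*} [Fintype ι] (e : OrthonormalBasis ι ℝ m)
    (hb : ∀ X Y : m, b X Y = - b Y X)
    (ha : ∀ X Y Z : m, 2 * ⟪a X Y, Z⟫ = ⟪b X Y, Z⟫ - ⟪X, b Y Z⟫ - ⟪b X Z, Y⟫)
    (X Y : m) : 4 * ⟪diffCurvOp b a Y Y X, X⟫ =
      - 4 * ⟪a X X, a Y Y⟫ + ∑ z, curvSummand b X Y (e z) := by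
  have h1 : ⟪a X Y, a Y X⟫ = ∑ z, ⟪a X Y, e z⟫ * ⟪a Y X, e z⟫ := by
    rw [← e.sum_inner_mul_inner]
    exact Finset.sum_congr rfl fun z _ => by rw [real_inner_comm (a Y X)]
  have h2 : ⟪a (b X Y) Y, X⟫ = ∑ z, ⟪b X Y, e z⟫ * ⟪a (e z) Y, X⟫ := by
    conv_lhs => rw [← e.sum_repr' (b X Y)]
    simp only [map_sum, map_smul, LinearMap.sum_apply, LinearMap.smul_apply, sum_inner,
      real_inner_smul_left]
    exact Finset.sum_congr rfl fun z _ => by rw [real_inner_comm]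
  have h3 : ∑ z, curvSummand b X Y (e z) =
      4 * (∑ z, ⟪a X Y, e z⟫ * ⟪a Y X, e z⟫) - 4 * ∑ z, ⟪b X Y, e z⟫ * ⟪a (e z) Y, X⟫ := by
    rw [Finset.mul_sum, Finset.mul_sum, ← Finset.sum_sub_distrib]
    refine Finset.sum_congr rfl fun z _ => ?_
    have k1 := ha X Y (e z)
    have k2 := ha Y X (e z)
    have k3 := ha (e z) Y X
    rw [hb X (e z), inner_neg_left] at k1
    rw [hb X (e z), inner_neg_right, hb Y X, inner_neg_left] at k2
    rw [hb (e z) Y, hb Y X, inner_neg_left, inner_neg_right] at k3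
    have c1 := real_inner_comm X (b Y (e z))
    have c2 := real_inner_comm Y (b (e z) X)
    have c3 := real_inner_comm (e z) (b X Y)
    have k1' : ⟪a X Y, e z⟫ = (⟪b X Y, e z⟫ - ⟪b Y (e z), X⟫ + ⟪b (e z) X, Y⟫) / 2 := by
      linarith
    have k2' : ⟪a Y X, e z⟫ = (-⟪b X Y, e z⟫ - ⟪b Y (e z), X⟫ + ⟪b (e z) X, Y⟫) / 2 := by
      linarith
    have k3' : ⟪a (e z) Y, X⟫ = (⟪b X Y, e z⟫ - ⟪b Y (e z), X⟫ - ⟪b (e z) X, Y⟫) / 2 := by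
      linarith
    rw [k1', k2', k3', curvSummand]
    ring
  rw [h3, diffCurvOp_inner hb ha, h1, h2]
  ring

/-- The double sum of `⟪R^d(X,Y)Y,X⟫` does not depend on the orthonormal basis. -/
theorem sum_trace_diffCurvOp {ι κ : Type*} [Fintype ι] [Fintype κ]
    (e : OrthonormalBasis ι ℝ m) (E : OrthonormalBasis κ ℝ m)
    (hb : ∀ X Y : m, b X Y = - b Y X)
    (ha : ∀ X Y Z : m, 2 * ⟪a X Y, Z⟫ = ⟪b X Y, Z⟫ - ⟪X, b Y Z⟫ - ⟪b X Z, Y⟫) :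
    ∑ p, LinearMap.trace ℝ m (diffCurvOp b a (E p) (E p)) =
      ∑ s, ∑ t, ⟪diffCurvOp b a (e t) (e t) (e s), e s⟫ := by
  have tr : ∀ T : m →ₗ[ℝ] m, ∑ s, ⟪T (e s), e s⟫ = ∑ p, ⟪T (E p), E p⟫ := fun T => by
    have h1 := T.trace_eq_sum_inner e
    have h2 := T.trace_eq_sum_inner E
    simp only [real_inner_comm] at h1 h2 ⊢
    rw [← h1, ← h2]
  calc ∑ p, LinearMap.trace ℝ m (diffCurvOp b a (E p) (E p))
      = ∑ p, ∑ s, ⟪diffCurvOp b a (E p) (E p) (e s), e s⟫ := by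
        refine Finset.sum_congr rfl fun p _ => ?_
        rw [LinearMap.trace_eq_sum_inner _ e]
        exact Finset.sum_congr rfl fun s _ => real_inner_comm _ _
    _ = ∑ s, ∑ p, ⟪diffCurvOp b a (e s) (e s) (E p), E p⟫ := by
        rw [Finset.sum_comm]
        exact Finset.sum_congr rfl fun s _ => Finset.sum_congr rfl fun p _ =>
          diffCurvOp_inner_symm hb ha _ _
    _ = ∑ s, ∑ t, ⟪diffCurvOp b a (e s) (e s) (e t), e t⟫ :=
        Finset.sum_congr rfl fun s _ => (tr _).symm
    _ = _ := Finset.sum_comm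

end Pointwise

/-- Heron's factorization: `2(x²y² + y²z² + z²x²) - (x⁴ + y⁴ + z⁴)` has the factor `x + y + z`.
It is applied with `x = p - q`, `y = q - s`, `z = s - p`. -/
theorem heron_degenerate {p q s A B C : ℝ} (hpq : p ≠ q)
    (h1 : (p - s) ^ 2 * A = (p - q) ^ 2 * C) (h2 : (q - s) ^ 2 * A = (p - q) ^ 2 * B) :
    2 * (A * B + B * C + C * A) - (A ^ 2 + B ^ 2 + C ^ 2) = 0 := by
  have hx : (p - q) ^ 2 ≠ 0 := pow_ne_zero 2 (sub_ne_zero.2 hpq)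
  obtain rfl : C = (p - s) ^ 2 * A / (p - q) ^ 2 := by rw [h1]; field_simp
  obtain rfl : B = (q - s) ^ 2 * A / (p - q) ^ 2 := by rw [h2]; field_simp
  field_simp
  ring

/-- The difference scalar curvatures of the summands add up to the
difference scalar curvature of `𝔪`: `s^d_1 + ⋯ + s^d_r = s^d`. -/
theorem difference_scalar_curvature_sum
    {m : Type*} [NormedAddCommGroup m] [InnerProductSpace ℝ m] [FiniteDimensional ℝ m]
    (b : m →ₗ[ℝ] m →ₗ[ℝ] m) (hb : ∀ X Y : m, b X Y = - b Y X)
    (a : m →ₗ[ℝ] m →ₗ[ℝ] m)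
    (ha : ∀ X Y Z : m, 2 * ⟪a X Y, Z⟫ = ⟪b X Y, Z⟫ - ⟪X, b Y Z⟫ - ⟪b X Z, Y⟫)
    (r : ℕ) (mS : Fin r → Submodule ℝ m) (lam : Fin r → ℝ)
    (horth : ∀ i j, i ≠ j → ∀ X ∈ mS i, ∀ Y ∈ mS j, ⟪X, Y⟫ = 0)
    (hspan : ⨆ i, mS i = ⊤)
    (hlam : StrictMono lam)
    (hcompat : ∀ i j k : Fin r, ∀ X ∈ mS i, ∀ Y ∈ mS j, ∀ Z ∈ mS k,
      (lam i - lam k) ^ 2 * ⟪b X Y, Z⟫ + (lam j - lam i) ^ 2 * ⟪b X Z, Y⟫ = 0)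
    (n : ℕ) (E : OrthonormalBasis (Fin n) ℝ m)
    (d : Fin r → ℕ) (F : ∀ j, OrthonormalBasis (Fin (d j)) ℝ (mS j)) :
    ∑ j : Fin r, ∑ p : Fin (d j), ∑ q : Fin (d j),
        ⟪diffCurvOp b a (F j q : m) (F j q : m) (F j p : m), (F j p : m)⟫ =
      ∑ p : Fin n, LinearMap.trace ℝ m (diffCurvOp b a (E p) (E p)) := by
  have hof : OrthogonalFamily ℝ (fun i => mS i) fun i => (mS i).subtypeₗᵢ :=
    fun i j hij X Y => horth i j hij X X.2 Y Y.2
  have hint : DirectSum.IsInternal mS := by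
    rw [hof.isInternal_iff, hspan, Submodule.top_orthogonal_eq_bot]
  set e : OrthonormalBasis (Σ j, Fin (d j)) ℝ m := hint.collectedOrthonormalBasis hof F with he
  have he_apply : ∀ j p, e ⟨j, p⟩ = (F j p : m) := fun j p => by
    rw [he, DirectSum.IsInternal.collectedOrthonormalBasis, Module.Basis.coe_toOrthonormalBasis,
      DirectSum.IsInternal.collectedBasis_coe]
    simp
  have hmem : ∀ s, e s ∈ mS s.1 := by
    rintro ⟨j, p⟩
    rw [he_apply]
    exact (F j p).2
  have hsq : ∀ {i j : Fin r}, i ≠ j → (lam i - lam j) ^ 2 ≠ 0 := fun hij =>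
    pow_ne_zero 2 (sub_ne_zero.2 (hlam.injective.ne hij))
  have hsub : ∀ {i k : Fin r}, i ≠ k → ∀ X ∈ mS i, ∀ Y ∈ mS i, ∀ Z ∈ mS k, ⟪b X Y, Z⟫ = 0 := by
    intro i k hik X hX Y hY Z hZ
    have h := hcompat i i k X hX Y hY Z hZ
    rw [sub_self, zero_pow two_ne_zero, zero_mul, add_zero] at h
    exact (mul_eq_zero.1 h).resolve_left (hsq hik)
  have hskew : ∀ {i j : Fin r}, i ≠ j → ∀ X ∈ mS i, ∀ Y ∈ mS j, ∀ Z ∈ mS j,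
      ⟪b X Y, Z⟫ = - ⟪b X Z, Y⟫ := by
    intro i j hij X hX Y hY Z hZ
    have h := hcompat i j j X hX Y hY Z hZ
    have h2 : (lam i - lam j) ^ 2 * (⟪b X Y, Z⟫ + ⟪b X Z, Y⟫) = 0 := by linear_combination h
    have := (mul_eq_zero.1 h2).resolve_left (hsq hij)
    linarith
  have hdiag : ∀ {i k : Fin r}, i ≠ k → ∀ X ∈ mS i, ∀ Z ∈ mS k, ⟪a X X, Z⟫ = 0 := by
    intro i k hik X hX Z hZ
    have h1 := ha X X Z
    have h2 := hskew hik.symm Z hZ X hX X hX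
    have h3 : b X X = 0 := by
      have h := hb X X
      rw [eq_neg_iff_add_eq_zero, ← two_smul ℝ] at h
      exact (smul_eq_zero.1 h).resolve_left two_ne_zero
    rw [hb X Z, h3, inner_neg_left, inner_neg_right, inner_zero_left] at h1
    linarith [real_inner_comm X (b Z X)]
  have hfirst : ∀ s t, s.1 ≠ t.1 → ⟪a (e s) (e s), a (e t) (e t)⟫ = 0 := by
    intro s t hst
    rw [← e.sum_inner_mul_inner]
    refine Finset.sum_eq_zero fun u _ => ?_
    by_cases hu : s.1 = u.1
    · rw [real_inner_comm (a (e t) (e t)),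
        hdiag (fun h => hst (hu.trans h.symm)) _ (hmem t) _ (hmem u), mul_zero]
    · rw [hdiag hu _ (hmem s) _ (hmem u), zero_mul]
  -- By `hG` below, the off-diagonal summands vanish unless the three indices are pairwise distinct;
  -- `G` extends them by zero to all triples, so that the sum can be rotated.
  let G : (Σ j, Fin (d j)) → (Σ j, Fin (d j)) → (Σ j, Fin (d j)) → ℝ := fun s t u =>
    if s.1 ≠ t.1 ∧ t.1 ≠ u.1 ∧ u.1 ≠ s.1 then curvSummand b (e s) (e t) (e u) else 0
  have hG : ∀ s t u, s.1 ≠ t.1 → curvSummand b (e s) (e t) (e u) = G s t u := by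
    intro s t u hst
    by_cases h1 : t.1 = u.1
    · have hu : e u ∈ mS t.1 := h1 ▸ hmem u
      have k1 := hsub hst.symm _ (hmem t) _ hu _ (hmem s)
      have k2 := hskew hst _ (hmem s) _ (hmem t) _ hu
      rw [← inner_neg_left, ← hb] at k2
      simp only [G, h1, ne_eq, not_true_eq_false, false_and, and_false, if_false, curvSummand, k1,
        k2]
      ring
    by_cases h2 : u.1 = s.1
    · have hu : e u ∈ mS s.1 := h2 ▸ hmem u
      have k1 := hsub hst _ hu _ (hmem s) _ (hmem t)
      have k2 := hskew hst.symm _ (hmem t) _ hu _ (hmem s)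
      rw [← inner_neg_left, ← hb] at k2
      simp only [G, h2, ne_eq, not_true_eq_false, and_false, if_false, curvSummand, k1, k2]
      ring
    · simp only [G, if_pos (show s.1 ≠ t.1 ∧ t.1 ≠ u.1 ∧ u.1 ≠ s.1 from ⟨hst, h1, h2⟩)]
  have hcyc : ∀ s t u, G s t u + G t u s + G u s t = 0 := by
    intro s t u
    by_cases h : s.1 ≠ t.1 ∧ t.1 ≠ u.1 ∧ u.1 ≠ s.1
    · obtain ⟨h1, h2, h3⟩ := h
      have k1 := hcompat _ _ _ _ (hmem s) _ (hmem t) _ (hmem u)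
      have k2 := hcompat _ _ _ _ (hmem t) _ (hmem s) _ (hmem u)
      rw [hb (e s) (e u), inner_neg_left] at k1
      rw [hb (e t) (e s), inner_neg_left] at k2
      have := heron_degenerate (p := lam s.1) (q := lam t.1) (s := lam u.1)
        (A := ⟪b (e s) (e t), e u⟫) (B := ⟪b (e t) (e u), e s⟫) (C := ⟪b (e u) (e s), e t⟫)
        (hlam.injective.ne h1) (by linear_combination k1) (by linear_combination -k2)
      simp only [G, h1, h2, h3, ne_eq, not_false_eq_true, and_self, if_true, curvSummand]
      linear_combination this
    · simp only [G]
      rw [if_neg h, if_neg (by tauto), if_neg (by tauto)]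
      simp
  have hGsum : ∑ s, ∑ t, ∑ u, G s t u = 0 := by
    have r1 : ∑ s, ∑ t, ∑ u, G t u s = ∑ s, ∑ t, ∑ u, G s t u := by
      rw [Finset.sum_comm]
      exact Finset.sum_congr rfl fun _ _ => Finset.sum_comm
    have r2 : ∑ s, ∑ t, ∑ u, G u s t = ∑ s, ∑ t, ∑ u, G s t u := by
      simp_rw [Finset.sum_comm (γ := Σ j, Fin (d j)) (f := fun t u => G u _ t)]
      exact Finset.sum_comm
    have h : ∑ s, ∑ t, ∑ u, (G s t u + G t u s + G u s t) = 0 := by simp [hcyc]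
    simp only [Finset.sum_add_distrib] at h
    linarith
  have hoff : ∑ s, ∑ t, (if s.1 = t.1 then 0 else
      ⟪diffCurvOp b a (e t) (e t) (e s), e s⟫) = 0 := by
    have h : ∑ s, ∑ t, 4 * (if s.1 = t.1 then 0 else
        ⟪diffCurvOp b a (e t) (e t) (e s), e s⟫) = ∑ s, ∑ t, ∑ u, G s t u := by
      refine Finset.sum_congr rfl fun s _ => Finset.sum_congr rfl fun t _ => ?_
      by_cases hst : s.1 = t.1
      · simp [G, hst]
      · rw [if_neg hst, diffCurvOp_inner_eq_sum e hb ha, hfirst s t hst, mul_zero, zero_add]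
        exact Finset.sum_congr rfl fun u _ => hG s t u hst
    simp only [← Finset.mul_sum] at h
    linarith
  have hon : ∑ s, ∑ t, (if s.1 = t.1 then
      ⟪diffCurvOp b a (e t) (e t) (e s), e s⟫ else 0) =
      ∑ j : Fin r, ∑ p : Fin (d j), ∑ q : Fin (d j),
        ⟪diffCurvOp b a (F j q : m) (F j q : m) (F j p : m), (F j p : m)⟫ := by
    rw [Fintype.sum_sigma]
    refine Finset.sum_congr rfl fun i _ => Finset.sum_congr rfl fun p _ => ?_
    rw [Fintype.sum_sigma, Finset.sum_eq_single i]
    · simp [he_apply]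
    · intro j _ hj
      simp [hj.symm]
    · simp
  rw [sum_trace_diffCurvOp e E hb ha, ← hon]
  refine ((add_zero _).symm.trans (congrArg _ hoff.symm)).trans ?_
  rw [← Finset.sum_add_distrib]
  refine Finset.sum_congr rfl fun s _ => ?_
  rw [← Finset.sum_add_distrib]
  refine Finset.sum_congr rfl fun t _ => ?_
  split_ifs <;> simp
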